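/- Let G be a single-decision causal influence diagram with decision D and let X be a variable of G other than D. Suppose that for every parent W of D and every utility node U it fails to hold that simultaneously (1) G contains a directed path from X to W, (2) G contains a directed path from D to U, and (3) W is not d-separated from U by ({D} ∪ Pa_D) \ {W}. Then no SCIM compatible with G has a response incentive on X. -/

import Mathlib

attribute [local instance] Classical.propDecidable

noncomputable section

/-! ### d-separation in a directed graph -/

/-- `b` is a collider on a path segment `a - b - c`. -/
def IsCollider {V : Type} (E : V → V → Prop) (a b c : V) : Prop := E a b ∧ E c b

/-- The triple `a - b - c` on an undirected path blocks the path w.r.t. `Z`: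
either the middle node is a non-collider (chain or fork) belonging to `Z`, or it is a
collider such that neither it nor any of its descendants belongs to `Z`. -/
def BlockedTriple {V : Type} (E : V → V → Prop) (Z : Set V) (a b c : V) : Prop :=
  (¬ IsCollider E a b c ∧ b ∈ Z) ∨
    (IsCollider E a b c ∧ ∀ w, Relation.ReflTransGen E b w → w ∉ Z)

/-- An undirected path: a nonempty list of distinct vertices in which consecutive
vertices are joined by an edge in one direction or the other. -/
def IsUPath {V : Type} (E : V → V → Prop) (p : List V) : Prop :=
  p ≠ [] ∧ p.Nodup ∧ p.Chain' (fun a b => E a b ∨ E b a)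

/-- A path is d-separated (blocked) by `Z` if some consecutive triple blocks it. -/
def BlockedPath {V : Type} (E : V → V → Prop) (Z : Set V) (p : List V) : Prop :=
  ∃ l₁ a b c l₂, p = l₁ ++ a :: b :: c :: l₂ ∧ BlockedTriple E Z a b c

/-- `Z` d-separates the node sets `S` and `T`: every undirected path from a node of `S`
to a node of `T` is blocked by `Z`. -/
def DSep {V : Type} (E : V → V → Prop) (S T Z : Set V) : Prop :=
  ∀ p : List V, IsUPath E p → (∃ s ∈ S, p.head? = some s) →
    (∃ t ∈ T, p.getLast? = some t) → BlockedPath E Z p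

/-! ### Causal influence diagrams and structural causal influence models -/

/-- A single-decision causal influence diagram: a finite DAG whose vertices are
partitioned into structure nodes, one decision node and utility nodes
(the utility nodes having no children). -/
structure CID (V : Type) where
  edge : V → V → Prop
  acyclic : ∀ v, ¬ Relation.TransGen edge v v
  decision : V
  utility : Finset V
  decision_not_utility : decision ∉ utility
  utility_no_children : ∀ u ∈ utility, ∀ v, ¬ edge u v

/-- A (single-decision) structural causal influence model over a CID: finite nonempty
domains for every variable, one finite-domain exogenous variable per variable, structural
functions for every non-decision variable, real-valued (injectively embedded, i.e. the
domain is a subset of ℝ) utility variables, and mutually independent exogenous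
distributions. -/
structure SCIM (V : Type) extends CID V where
  dom : V → Type
  dom_fintype : ∀ v, Fintype (dom v)
  dom_nonempty : ∀ v, Nonempty (dom v)
  edom : V → Type
  edom_fintype : ∀ v, Fintype (edom v)
  edom_nonempty : ∀ v, Nonempty (edom v)
  utilVal : ∀ v, dom v → ℝ
  utilVal_inj : ∀ v ∈ utility, Function.Injective (utilVal v)
  f : ∀ v, v ≠ decision → (∀ w, edge w v → dom w) → edom v → dom v
  μ : ∀ v, edom v → ℝ
  μ_nonneg : ∀ v e, 0 ≤ μ v e
  μ_sum : ∀ v, ∑ e ∈ @Finset.univ (edom v) (edom_fintype v), μ v e = 1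

variable {V : Type} [Fintype V] [DecidableEq V]

instance (M : SCIM V) (v : V) : Fintype (M.dom v) := M.dom_fintype v
instance (M : SCIM V) (v : V) : Nonempty (M.dom v) := M.dom_nonempty v
instance (M : SCIM V) (v : V) : Fintype (M.edom v) := M.edom_fintype v
instance (M : SCIM V) (v : V) : Nonempty (M.edom v) := M.edom_nonempty v

namespace SCIM

variable (M : SCIM V)

/-- A joint setting of the exogenous variables. -/
abbrev Env := ∀ v, M.edom v

/-- Joint probability of an exogenous setting (the exogenous variables are independent). -/
def prob (ε : M.Env) : ℝ := ∏ v, M.μ v (ε v)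

/-- The type of structural mechanisms for the vertex `v`. -/
def Mechanism (v : V) : Type := (∀ w, M.edge w v → M.dom w) → M.edom v → M.dom v

/-- A policy: a structural function for the decision node. -/
abbrev Policy := M.Mechanism M.decision

theorem edge_wf : WellFounded M.edge := by
  haveI : IsTrans V (Relation.TransGen M.edge) := ⟨fun _ _ _ h h' => h.trans h'⟩
  haveI : IsIrrefl V (Relation.TransGen M.edge) := ⟨M.acyclic⟩
  exact Subrelation.wf (fun h => Relation.TransGen.single h)
    (Finite.wellFounded_of_trans_of_irrefl _)

/-- The unique solution of the structural equations `mech` given exogenous setting `ε`. -/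
def solve (mech : ∀ v, M.Mechanism v) (ε : M.Env) : ∀ v, M.dom v :=
  WellFounded.fix (C := fun v => M.dom v) M.edge_wf
    (fun v IH => mech v (fun w hw => IH w hw) (ε v))

/-- The mechanisms of the SCM `M_π` obtained by fixing the policy `π`. -/
def polMech (π : M.Policy) : ∀ v, M.Mechanism v :=
  fun v => if h : v = M.decision then cast (congrArg M.Mechanism h).symm π else M.f v h

/-- Apply an intervention (a partial assignment `ι` of values) to mechanisms:
intervened variables are set to constants. -/
def doMech (mech : ∀ v, M.Mechanism v) (ι : ∀ v, Option (M.dom v)) : ∀ v, M.Mechanism v :=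
  fun v => match ι v with
    | some x => fun _ _ => x
    | none => mech v

/-- The single intervention `do(X = x)` as a partial assignment. -/
def single (X : V) (x : M.dom X) : ∀ v, Option (M.dom v) :=
  fun v => if h : v = X then some (cast (congrArg M.dom h).symm x) else none

/-- The value `W(ε)` of each variable in `M_π`. -/
def val (π : M.Policy) (ε : M.Env) : ∀ v, M.dom v := M.solve (M.polMech π) ε

/-- The potential response: the value of each variable in the submodel of `M_π`
given by the intervention `ι`. -/
def valDo (π : M.Policy) (ι : ∀ v, Option (M.dom v)) (ε : M.Env) : ∀ v, M.dom v :=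
  M.solve (M.doMech (M.polMech π) ι) ε

/-- Total utility of an assignment of values to the variables. -/
def totUtil (a : ∀ v, M.dom v) : ℝ := ∑ v ∈ M.utility, M.utilVal v (a v)

/-- Expected total utility of the policy `π`. -/
def EU (π : M.Policy) : ℝ := ∑ ε : M.Env, M.prob ε * M.totUtil (M.val π ε)

/-- An optimal policy maximizes expected total utility. -/
def Optimal (π : M.Policy) : Prop := ∀ π' : M.Policy, M.EU π' ≤ M.EU π

/-- A decision context: a joint value of the parents of the decision. -/
abbrev Ctx := ∀ w, M.edge w M.decision → M.dom w

/-- The decision context realized by the exogenous setting `ε` in `M_π`. -/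
def ctx (π : M.Policy) (ε : M.Env) : M.Ctx := fun w _ => M.val π ε w

/-- Probability of a decision context in `M_π`. -/
def ctxProb (π : M.Policy) (pa : M.Ctx) : ℝ :=
  ∑ ε : M.Env, if M.ctx π ε = pa then M.prob ε else 0

/-- Conditional expectation of `g` given the decision context `pa` in `M_π`. -/
def condExp (π : M.Policy) (pa : M.Ctx) (g : M.Env → ℝ) : ℝ :=
  (∑ ε : M.Env, if M.ctx π ε = pa then M.prob ε * g ε else 0) / M.ctxProb π pa

/-- The nested potential response `𝒰_{X_d}(ε)`: total utility when `X` is set to the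
value it would take under `do(D = d)`, everything else following `M_π`. -/
def nestedU (π : M.Policy) (X : V) (d : M.dom M.decision) (ε : M.Env) : ℝ :=
  M.totUtil (M.valDo π (M.single X (M.valDo π (M.single M.decision d) ε X)) ε)

/-- Control incentive on `X`: under every optimal policy, in some positive-probability
decision context some alternative decision `d` changes expected utility through `X`. -/
def ControlIncentive (X : V) : Prop :=
  ∀ π : M.Policy, M.Optimal π →
    ∃ pa : M.Ctx, 0 < M.ctxProb π pa ∧ ∃ d : M.dom M.decision,
      M.condExp π pa (M.nestedU π X d) ≠
        M.condExp π pa (fun ε => M.totUtil (M.val π ε))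

/-- Response incentive on `X`: under every optimal policy some intervention on `X`
changes the decision for some exogenous setting. -/
def ResponseIncentive (X : V) : Prop :=
  ∀ π : M.Policy, M.Optimal π →
    ∃ (x : M.dom X) (ε : M.Env),
      M.valDo π (M.single X x) ε M.decision ≠ M.val π ε M.decision

/-- Conditional probability of `event` given `cond` in `M_π`. -/
def cprob (π : M.Policy) (event cond : M.Env → Prop) : ℝ :=
  (∑ ε : M.Env, if cond ε ∧ event ε then M.prob ε else 0) /
    (∑ ε : M.Env, if cond ε then M.prob ε else 0)

/-- Counterfactual fairness of a policy `π` with respect to a protected attribute `A`: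
conditional on any positive-probability decision context and value of `A`, intervening
on `A` does not change the distribution of the decision. -/
def CFair (π : M.Policy) (A : V) : Prop :=
  ∀ (d : M.dom M.decision) (pa : M.Ctx) (a a' : M.dom A),
    (0 < ∑ ε : M.Env, if M.ctx π ε = pa ∧ M.val π ε A = a then M.prob ε else 0) →
      M.cprob π (fun ε => M.valDo π (M.single A a') ε M.decision = d)
          (fun ε => M.ctx π ε = pa ∧ M.val π ε A = a) =
        M.cprob π (fun ε => M.val π ε M.decision = d)
          (fun ε => M.ctx π ε = pa ∧ M.val π ε A = a)

/-- Expected value of the sum of utility variables in `S`. -/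
def EUOn (S : Finset V) (π : M.Policy) : ℝ :=
  ∑ ε : M.Env, M.prob ε * ∑ v ∈ S, M.utilVal v (M.val π ε v)

/-- The policy obtained from `π` by replacing the observations of the decision-parents
that are descendants of `X` by the fixed values `p`. -/
def modPolicy (π : M.Policy) (X : V) (p : M.Ctx) : M.Policy :=
  fun pa e =>
    π (fun w hw => if Relation.ReflTransGen M.edge X w then p w hw else pa w hw) e

end SCIM

/-- The graphical criterion for control incentives: a directed path `D ⇝ X ⇝ U`
for some utility node `U`. -/
def CICriterion {V : Type} (G : CID V) (X : V) : Prop :=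
  Relation.ReflTransGen G.edge G.decision X ∧
    ∃ u ∈ G.utility, Relation.ReflTransGen G.edge X u

/-- The graphical criterion for response incentives: a directed path from `X` to some
parent `W` of the decision `D`, a directed path from `D` to some utility node `U`, and
`W` d-connected to `U` given `({D} ∪ Pa_D) \ {W}`. -/
def RICriterion {V : Type} (G : CID V) (X : V) : Prop :=
  ∃ W, G.edge W G.decision ∧ ∃ u ∈ G.utility,
    Relation.ReflTransGen G.edge X W ∧
    Relation.ReflTransGen G.edge G.decision u ∧
    ¬ DSep G.edge {W} {u} (({G.decision} ∪ {w | G.edge w G.decision}) \ {W})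

end

/-!
Let `C` be the set of vertices joined to a utility node downstream of `D` by a trail that is
active given `{D} ∪ Pa_D`. Under the intervention `do(Pa_D = o, D = d)`, the natural values of the
vertices in `C` depend only on exogenous variables of vertices in `C`, and those of the parents
of `D` outside `C` depend only on exogenous variables of vertices outside `C` and not on `d`.
By independence, the contribution of the context `o` to the expected downstream utility is
therefore the product of a probability that the policy does not affect and a score of `(o, d)`,
averaged over the choice of `d` in that context. The score sees only those parents of `D` that lie
in `C` or have a child in `C`. Choosing in each context a decision of maximal score is optimal, and
this policy ignores all other parents. If `X` has no directed path to a parent that the policy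
uses, then intervening on `X` leaves the decision unchanged.
-/

section Trails

theorem exists_nodup_isChain_cons_of_reflTransGen {α : Type*} {r : α → α → Prop} {a b : α}
    (h : Relation.ReflTransGen r a b) :
    ∃ l : List α, (a :: l).Nodup ∧ (a :: l).IsChain r ∧ (a :: l).getLast? = some b := by
  induction h using Relation.ReflTransGen.head_induction_on with
  | refl => exact ⟨[], by simp, by simp, by simp⟩
  | @head a c hac _ ih =>
    obtain ⟨l, hnodup, hchain, hlast⟩ := ih
    by_cases ha : a ∈ c :: l
    · obtain ⟨l₁, l₂, hsplit⟩ := List.append_of_mem ha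
      have hsuffix : a :: l₂ <:+ c :: l := ⟨l₁, hsplit.symm⟩
      refine ⟨l₂, hnodup.sublist hsuffix.sublist, hchain.suffix hsuffix, ?_⟩
      simpa [hsplit, List.getLast?_append] using hlast
    · exact ⟨c :: l, List.nodup_cons.2 ⟨ha, hnodup⟩, List.isChain_cons_cons.2 ⟨hac, hchain⟩,
        by simpa using hlast⟩

variable {V : Type} {E : V → V → Prop} {Z : Set V} {a b c : V}

/-- One step `a — b` of a trail that is active given `Z`. The condition on a backward step
`a ← b` includes that `a` has a descendant in `Z`, whether or not the trail has a collider at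
`a`, so that activity of a trail is a condition on its single steps. -/
def ActiveStep (E : V → V → Prop) (Z : Set V) (a b : V) : Prop :=
  (E a b ∧ a ∉ Z) ∨ (E b a ∧ b ∉ Z ∧ ∃ z ∈ Z, Relation.ReflTransGen E a z)

theorem ActiveStep.adj (h : ActiveStep E Z a b) : E a b ∨ E b a :=
  h.imp And.left And.left

theorem ActiveStep.anti {Z' : Set V} (hsub : Z' ⊆ Z)
    (hreach : ∀ z ∈ Z, ∃ z' ∈ Z', Relation.ReflTransGen E z z') (h : ActiveStep E Z a b) :
    ActiveStep E Z' a b := by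
  rcases h with ⟨hab, ha⟩ | ⟨hba, hb, z, hz, haz⟩
  · exact Or.inl ⟨hab, fun ha' => ha (hsub ha')⟩
  · obtain ⟨z', hz', hzz'⟩ := hreach z hz
    exact Or.inr ⟨hba, fun hb' => hb (hsub hb'), z', hz', haz.trans hzz'⟩

theorem ActiveStep.not_blockedTriple (hE : ∀ a b, E a b → ¬ E b a)
    (hab : ActiveStep E Z a b) (hbc : ActiveStep E Z b c) : ¬ BlockedTriple E Z a b c := by
  rintro (⟨hcol, hb⟩ | ⟨⟨-, hcb⟩, hdesc⟩)
  · rcases hab with ⟨hab, -⟩ | ⟨-, hb', -⟩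
    · rcases hbc with ⟨-, hb'⟩ | ⟨hcb, -⟩
      · exact hb' hb
      · exact hcol ⟨hab, hcb⟩
    · exact hb' hb
  · rcases hbc with ⟨hbc, -⟩ | ⟨-, -, z, hz, hbz⟩
    · exact hE b c hbc hcb
    · exact hdesc z hbz hz

theorem not_dSep_of_reflTransGen_activeStep (hE : ∀ a b, E a b → ¬ E b a)
    (h : Relation.ReflTransGen (ActiveStep E Z) a b) : ¬ DSep E {a} {b} Z := by
  intro hsep
  obtain ⟨l, hnodup, hchain, hlast⟩ := exists_nodup_isChain_cons_of_reflTransGen h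
  obtain ⟨l₁, x, y, z, l₂, hsplit, hblocked⟩ := hsep (a :: l)
    ⟨List.cons_ne_nil a l, hnodup, hchain.imp fun _ _ => ActiveStep.adj⟩
    ⟨a, rfl, rfl⟩ ⟨b, rfl, hlast⟩
  have hsuffix : (x :: y :: z :: l₂).IsChain (ActiveStep E Z) :=
    hchain.suffix ⟨l₁, hsplit.symm⟩
  obtain ⟨hxy, hyz, -⟩ : ActiveStep E Z x y ∧ ActiveStep E Z y z ∧ _ := by
    simpa only [List.isChain_cons_cons] using hsuffix
  exact hxy.not_blockedTriple hE hyz hblocked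

end Trails

namespace CID

variable {V : Type} {G : CID V} {v w : V}

theorem edge_asymm (h : G.edge v w) : ¬ G.edge w v := fun h' =>
  G.acyclic v ((Relation.TransGen.single h).tail h')

theorem ne_decision_of_edge (hw : G.edge w G.decision) : w ≠ G.decision := by
  rintro rfl
  exact edge_asymm hw hw

/-- The conditioning set `{D} ∪ Pa_D`. -/
def observed (G : CID V) : Set V := {G.decision} ∪ {w | G.edge w G.decision}

/-- The vertices joined to a utility node downstream of the decision by a trail that is active
given `{D} ∪ Pa_D`. -/
def utilityConnected (G : CID V) : Set V :=
  {v | ∃ u ∈ G.utility, Relation.ReflTransGen G.edge G.decision u ∧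
    Relation.ReflTransGen (ActiveStep G.edge G.observed) v u}

/-- The vertices from which a trail to a downstream utility node is active given `{D} ∪ Pa_D`
with the starting vertex itself removed. Among the parents of the decision these are the
requisite observations. -/
def requisite (G : CID V) : Set V :=
  {w | w ∈ G.utilityConnected ∨ ∃ c ∈ G.utilityConnected, G.edge w c}

theorem decision_mem_observed : G.decision ∈ G.observed := Or.inl rfl

theorem not_mem_observed : v ∉ G.observed ↔ v ≠ G.decision ∧ ¬ G.edge v G.decision :=
  not_or

theorem reflTransGen_decision_of_mem_observed (hv : v ∈ G.observed) :
    Relation.ReflTransGen G.edge v G.decision := by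
  rcases hv with rfl | hv
  · exact .refl
  · exact .single hv

theorem not_mem_observed_of_mem_utility (hv : v ∈ G.utility) : v ∉ G.observed :=
  not_mem_observed.2
    ⟨fun h => G.decision_not_utility (h ▸ hv), G.utility_no_children v hv G.decision⟩

theorem mem_utilityConnected_of_edge (hvw : G.edge v w) (hv : v ∉ G.observed)
    (hw : w ∈ G.utilityConnected) : v ∈ G.utilityConnected := by
  obtain ⟨u, hu, hDu, hwu⟩ := hw
  exact ⟨u, hu, hDu, .head (Or.inl ⟨hvw, hv⟩) hwu⟩

theorem mem_utilityConnected_of_edge_of_reflTransGen (hvw : G.edge v w) (hv : v ∉ G.observed)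
    (hvC : v ∈ G.utilityConnected) (hwD : Relation.ReflTransGen G.edge w G.decision) :
    w ∈ G.utilityConnected := by
  obtain ⟨u, hu, hDu, hvu⟩ := hvC
  exact ⟨u, hu, hDu, .head (Or.inr ⟨hvw, hv, _, decision_mem_observed, hwD⟩) hvu⟩

theorem decision_not_mem_utilityConnected : G.decision ∉ G.utilityConnected := by
  rintro ⟨u, hu, -, hDu⟩
  rcases hDu.cases_head with h | ⟨c, ⟨-, hD⟩ | ⟨hcD, hc, -⟩, -⟩
  · exact G.decision_not_utility (h ▸ hu)
  · exact hD decision_mem_observed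
  · exact hc (Or.inr hcD)

theorem exists_not_dSep_of_mem_requisite (hw : G.edge w G.decision) (hreq : w ∈ G.requisite) :
    ∃ u ∈ G.utility, Relation.ReflTransGen G.edge G.decision u ∧
      ¬ DSep G.edge {w} {u} (G.observed \ {w}) := by
  have hD : G.decision ∈ G.observed \ {w} :=
    ⟨decision_mem_observed, (ne_decision_of_edge hw).symm⟩
  have hstep : ActiveStep G.edge G.observed ≤ ActiveStep G.edge (G.observed \ {w}) :=
    fun _ _ => ActiveStep.anti Set.sdiff_subset fun _ hz =>
      ⟨G.decision, hD, reflTransGen_decision_of_mem_observed hz⟩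
  rcases hreq with ⟨u, hu, hDu, hwu⟩ | ⟨c, ⟨u, hu, hDu, hcu⟩, hwc⟩
  · exact ⟨u, hu, hDu, not_dSep_of_reflTransGen_activeStep (fun _ _ => edge_asymm)
      (Relation.ReflTransGen.mono hstep _ _ hwu)⟩
  · have hfirst : ActiveStep G.edge (G.observed \ {w}) w c := Or.inl ⟨hwc, fun h => h.2 rfl⟩
    exact ⟨u, hu, hDu, not_dSep_of_reflTransGen_activeStep (fun _ _ => edge_asymm)
      (.head hfirst (Relation.ReflTransGen.mono hstep _ _ hcu))⟩

end CID

section Resampling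

variable {ι : Type*} {α : ι → Type*}

theorem involutive_piecewise_swap (S : Set ι) :
    Function.Involutive fun p : (∀ i, α i) × (∀ i, α i) =>
      (S.piecewise p.2 p.1, S.piecewise p.1 p.2) := by
  rintro ⟨a, b⟩
  ext i <;> by_cases hi : i ∈ S <;> simp [hi]

variable [Fintype ι] {R : Type*} [CommSemiring R] {μ : ∀ i, α i → R}

theorem prod_piecewise_mul_prod_piecewise (S : Set ι) (a b : ∀ i, α i) :
    (∏ i, μ i (S.piecewise b a i)) * ∏ i, μ i (S.piecewise a b i) =
      (∏ i, μ i (a i)) * ∏ i, μ i (b i) := by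
  simp only [← Finset.prod_mul_distrib]
  refine Finset.prod_congr rfl fun i _ => ?_
  by_cases hi : i ∈ S <;> simp [hi, mul_comm]

variable [DecidableEq ι] [∀ i, Fintype (α i)]

theorem sum_prod_eq_one (hμ : ∀ i, ∑ x, μ i x = 1) : ∑ a : ∀ i, α i, ∏ i, μ i (a i) = 1 := by
  rw [← Fintype.prod_sum]
  exact Finset.prod_eq_one fun i _ => hμ i

theorem sum_sum_prod_mul_piecewise (hμ : ∀ i, ∑ x, μ i x = 1) (S : Set ι)
    (f : (∀ i, α i) → R) :
    ∑ a, (∏ i, μ i (a i)) * ∑ b, (∏ i, μ i (b i)) * f (S.piecewise b a) =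
      ∑ a, (∏ i, μ i (a i)) * f a := by
  let p : (∀ i, α i) → R := fun a => ∏ i, μ i (a i)
  calc ∑ a, p a * ∑ b, p b * f (S.piecewise b a)
      = ∑ ab : (∀ i, α i) × (∀ i, α i), p ab.1 * p ab.2 * f (S.piecewise ab.2 ab.1) := by
        simp only [Fintype.sum_prod_type, Finset.mul_sum, mul_assoc]
    _ = ∑ ab : (∀ i, α i) × (∀ i, α i), p ab.1 * p ab.2 * f ab.1 := by
        refine Fintype.sum_equiv (involutive_piecewise_swap S).toPerm _ _ fun ab => ?_
        rw [← prod_piecewise_mul_prod_piecewise S ab.1 ab.2]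
        rfl
    _ = ∑ a, p a * f a := by
        simp only [Fintype.sum_prod_type, mul_right_comm _ _ (f _), ← Finset.mul_sum]
        simp only [p, sum_prod_eq_one hμ, mul_one]

end Resampling

namespace SCIM

section Basic

variable {V : Type} (M : SCIM V)

theorem doMech_of_eq_some {mech : ∀ v, M.Mechanism v} {ι : ∀ v, Option (M.dom v)} {v : V}
    {x : M.dom v} (h : ι v = some x) : M.doMech mech ι v = fun _ _ => x := by
  rw [doMech, h]

theorem doMech_of_eq_none {mech : ∀ v, M.Mechanism v} {ι : ∀ v, Option (M.dom v)} {v : V}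
    (h : ι v = none) : M.doMech mech ι v = mech v := by
  rw [doMech, h]

theorem prob_nonneg [Fintype V] (ε : M.Env) : 0 ≤ M.prob ε :=
  Finset.prod_nonneg fun v _ => M.μ_nonneg v (ε v)

end Basic

section Policy

variable {V : Type} [DecidableEq V] (M : SCIM V)

theorem polMech_decision (π : M.Policy) : M.polMech π M.decision = π := by
  simp [polMech]

theorem polMech_congr_of_ne (π π' : M.Policy) {v : V} (hv : v ≠ M.decision) :
    M.polMech π v = M.polMech π' v :=
  (dif_neg hv).trans (dif_neg hv).symm

theorem single_of_ne {X v : V} (hv : v ≠ X) (x : M.dom X) : M.single X x v = none :=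
  dif_neg hv

/-- The intervention `do(Pa_D = o, D = d)`. -/
noncomputable def clamp (o : M.Ctx) (d : M.dom M.decision) : ∀ v, Option (M.dom v) :=
  Function.update (fun v => if h : M.edge v M.decision then some (o v h) else none)
    M.decision (some d)

theorem clamp_decision (o : M.Ctx) (d : M.dom M.decision) :
    M.clamp o d M.decision = some d :=
  Function.update_self ..

theorem clamp_of_edge (o : M.Ctx) (d : M.dom M.decision) {w : V} (hw : M.edge w M.decision) :
    M.clamp o d w = some (o w hw) := by
  rw [clamp, Function.update_of_ne (CID.ne_decision_of_edge hw), dif_pos hw]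

theorem clamp_of_not_mem_observed (o : M.Ctx) (d : M.dom M.decision) {v : V}
    (hv : v ∉ M.observed) : M.clamp o d v = none := by
  obtain ⟨hvD, hv⟩ := CID.not_mem_observed.1 hv
  rw [clamp, Function.update_of_ne hvD, dif_neg hv]

theorem mem_observed_of_clamp_eq_some {o : M.Ctx} {d : M.dom M.decision} {v : V} {x : M.dom v}
    (h : M.clamp o d v = some x) : v ∈ M.observed := by
  by_contra hv
  simp [M.clamp_of_not_mem_observed o d hv] at h

theorem forall_clamp_eq_some_iff {o : M.Ctx} {d : M.dom M.decision}
    {P : ∀ v, M.dom v → Prop} :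
    (∀ v x, M.clamp o d v = some x → P v x) ↔
      P M.decision d ∧ ∀ w (hw : M.edge w M.decision), P w (o w hw) := by
  refine ⟨fun h => ⟨h _ _ (M.clamp_decision o d), fun w hw => h _ _ (M.clamp_of_edge o d hw)⟩,
    fun ⟨hD, hPa⟩ v x hx => ?_⟩
  rcases M.mem_observed_of_clamp_eq_some hx with rfl | hv
  · rw [clamp_decision, Option.some_inj] at hx
    exact hx ▸ hD
  · rw [clamp_of_edge _ _ _ hv, Option.some_inj] at hx
    exact hx ▸ hPa v hv

end Policy

variable {V : Type} [Fintype V] [DecidableEq V] (M : SCIM V)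

section StructuralEquations

variable {mech mech' : ∀ v, M.Mechanism v} {ι ι' : ∀ v, Option (M.dom v)} {ε ε' : M.Env}

theorem solve_eq (mech : ∀ v, M.Mechanism v) (ε : M.Env) (v : V) :
    M.solve mech ε v = mech v (fun w _ => M.solve mech ε w) (ε v) :=
  WellFounded.fix_eq _ _ _

theorem eq_solve {a : ∀ v, M.dom v} (ha : ∀ v, a v = mech v (fun w _ => a w) (ε v)) :
    a = M.solve mech ε := by
  funext v
  induction v using M.edge_wf.induction with
  | h v ih =>
    rw [ha, solve_eq]
    congr 1
    funext w hw
    exact ih w hw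

/-- The natural value of `v` under the intervention `ι`: what the mechanism of `v` returns in
the intervened model, even if `ι` overrides it. -/
def naturalVal (mech : ∀ v, M.Mechanism v) (ι : ∀ v, Option (M.dom v)) (ε : M.Env) (v : V) :
    M.dom v :=
  mech v (fun w _ => M.solve (M.doMech mech ι) ε w) (ε v)

theorem solve_doMech_of_eq_some {v : V} {x : M.dom v} (h : ι v = some x) :
    M.solve (M.doMech mech ι) ε v = x := by
  rw [solve_eq, M.doMech_of_eq_some h]

theorem solve_doMech_of_eq_none {v : V} (h : ι v = none) :
    M.solve (M.doMech mech ι) ε v = M.naturalVal mech ι ε v := by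
  rw [solve_eq, M.doMech_of_eq_none h, naturalVal]

theorem naturalVal_none (mech : ∀ v, M.Mechanism v) (ε : M.Env) :
    M.naturalVal mech (fun _ => none) ε = M.solve mech ε :=
  funext fun v => (M.solve_eq mech ε v).symm

theorem naturalVal_congr {A : Set V} (hmech : ∀ v ∈ A, mech v = mech' v)
    (hε : ∀ v ∈ A, ε v = ε' v)
    (hι : ∀ v ∈ A, ∀ w, M.edge w v → ι w = ι' w ∧ (ι w = none → w ∈ A)) {v : V} (hv : v ∈ A) :
    M.naturalVal mech ι ε v = M.naturalVal mech' ι' ε' v := by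
  induction v using M.edge_wf.induction with
  | h v ih =>
    rw [naturalVal, naturalVal, hmech v hv, hε v hv]
    congr 1
    funext w hw
    obtain ⟨hιw, hwA⟩ := hι v hv w hw
    cases hx : ι w with
    | none =>
      rw [M.solve_doMech_of_eq_none hx, M.solve_doMech_of_eq_none (hιw ▸ hx), ih w hw (hwA hx)]
    | some x => rw [M.solve_doMech_of_eq_some hx, M.solve_doMech_of_eq_some (hιw ▸ hx)]

theorem solve_doMech_eq_solve_of_solve_eq (h : ∀ v x, ι v = some x → M.solve mech ε v = x) :
    M.solve (M.doMech mech ι) ε = M.solve mech ε := by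
  refine (M.eq_solve fun v => ?_).symm
  cases hx : ι v with
  | none => exact (M.solve_eq mech ε v).trans (by rw [M.doMech_of_eq_none hx])
  | some x => rw [M.doMech_of_eq_some hx, h v x hx]

theorem solve_doMech_eq_solve_of_naturalVal_eq
    (h : ∀ v x, ι v = some x → M.naturalVal mech ι ε v = x) :
    M.solve (M.doMech mech ι) ε = M.solve mech ε := by
  refine M.eq_solve fun v => ?_
  cases hx : ι v with
  | none => exact M.solve_doMech_of_eq_none hx
  | some x => exact (M.solve_doMech_of_eq_some hx).trans (h v x hx).symm

theorem forall_solve_eq_iff_forall_naturalVal_eq :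
    (∀ v x, ι v = some x → M.solve mech ε v = x) ↔
      ∀ v x, ι v = some x → M.naturalVal mech ι ε v = x := by
  constructor
  · intro h v x hx
    rw [naturalVal, M.solve_doMech_eq_solve_of_solve_eq h, ← M.solve_eq mech ε v, h v x hx]
  · intro h v x hx
    rw [← M.solve_doMech_eq_solve_of_naturalVal_eq h, M.solve_doMech_of_eq_some hx]

end StructuralEquations

theorem val_decision (π : M.Policy) (ε : M.Env) :
    M.val π ε M.decision = π (M.ctx π ε) (ε M.decision) := by
  rw [val, solve_eq, polMech_decision]
  rfl

theorem valDo_single_decision (π : M.Policy) {X : V} (hX : X ≠ M.decision) (x : M.dom X)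
    (ε : M.Env) : M.valDo π (M.single X x) ε M.decision =
      π (fun w _ => M.valDo π (M.single X x) ε w) (ε M.decision) := by
  rw [valDo, M.solve_doMech_of_eq_none (M.single_of_ne hX.symm x), naturalVal, polMech_decision]

theorem valDo_single_of_not_reflTransGen (π : M.Policy) {X : V} (x : M.dom X) (ε : M.Env)
    {v : V} (hv : ¬ Relation.ReflTransGen M.edge X v) :
    M.valDo π (M.single X x) ε v = M.val π ε v := by
  have hnone : ∀ w, ¬ Relation.ReflTransGen M.edge X w → M.single X x w = none :=
    fun w hw => M.single_of_ne (by rintro rfl; exact hw .refl) x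
  rw [valDo, val, M.solve_doMech_of_eq_none (hnone v hv), ← naturalVal_none]
  refine M.naturalVal_congr (A := {w | ¬ Relation.ReflTransGen M.edge X w}) (fun _ _ => rfl)
    (fun _ _ => rfl) (fun u hu w hwu => ?_) hv
  have hw : ¬ Relation.ReflTransGen M.edge X w := fun h => hu (h.tail hwu)
  exact ⟨hnone w hw, fun _ => hw⟩

theorem val_congr_of_not_reflTransGen (π π' : M.Policy) (ε : M.Env) {v : V}
    (hv : ¬ Relation.ReflTransGen M.edge M.decision v) : M.val π ε v = M.val π' ε v := by
  rw [val, val, ← naturalVal_none, ← naturalVal_none]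
  refine M.naturalVal_congr (A := {w | ¬ Relation.ReflTransGen M.edge M.decision w})
    (fun w hw => ?_) (fun _ _ => rfl) (fun u hu w hwu => ⟨rfl, fun _ h => hu (h.tail hwu)⟩) hv
  have hwD : w ≠ M.decision := by
    rintro rfl
    exact hw .refl
  exact M.polMech_congr_of_ne π π' hwD

section Clamping

variable {o o' : M.Ctx} {d d' : M.dom M.decision} {ε ε' : M.Env} {π : M.Policy} {v : V}

/-- The values of the variables under `do(Pa_D = o, D = d)`. The policy is immaterial here, so a
constant one is used. -/
noncomputable def clampedVal (o : M.Ctx) (d : M.dom M.decision) (ε : M.Env) : ∀ v, M.dom v :=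
  M.valDo (fun _ _ => d) (M.clamp o d) ε

/-- The natural values of the variables under `do(Pa_D = o, D = d)`. -/
noncomputable def clampedNaturalVal (o : M.Ctx) (d : M.dom M.decision) (ε : M.Env) : ∀ v, M.dom v :=
  M.naturalVal (M.polMech fun _ _ => d) (M.clamp o d) ε

theorem clampedVal_of_not_mem_observed (o : M.Ctx) (d : M.dom M.decision) (ε : M.Env)
    (hv : v ∉ M.observed) : M.clampedVal o d ε v = M.clampedNaturalVal o d ε v :=
  M.solve_doMech_of_eq_none (M.clamp_of_not_mem_observed o d hv)

theorem naturalVal_clamp (π : M.Policy) (o : M.Ctx) (d : M.dom M.decision) (ε : M.Env)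
    (hv : v ≠ M.decision) :
    M.naturalVal (M.polMech π) (M.clamp o d) ε v = M.clampedNaturalVal o d ε v := by
  refine M.naturalVal_congr (A := {M.decision}ᶜ) (fun w hw => M.polMech_congr_of_ne _ _ hw)
    (fun _ _ => rfl) (fun u _ w _ => ⟨rfl, ?_⟩) hv
  rintro hnone rfl
  simp [clamp_decision] at hnone

theorem valDo_clamp (π : M.Policy) (o : M.Ctx) (d : M.dom M.decision) (ε : M.Env) :
    M.valDo π (M.clamp o d) ε = M.clampedVal o d ε := by
  funext v
  cases hx : M.clamp o d v with
  | none =>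
    have hv : v ≠ M.decision := by
      rintro rfl
      simp [clamp_decision] at hx
    rw [valDo, M.solve_doMech_of_eq_none hx, M.naturalVal_clamp π o d ε hv]
    exact (M.solve_doMech_of_eq_none hx).symm
  | some x =>
    exact (M.solve_doMech_of_eq_some hx).trans (M.solve_doMech_of_eq_some hx).symm

theorem forall_clamp_val_eq_iff :
    (∀ v x, M.clamp o (π o (ε M.decision)) v = some x → M.val π ε v = x) ↔ M.ctx π ε = o := by
  rw [M.forall_clamp_eq_some_iff (P := fun v x => M.val π ε v = x)]
  constructor
  · rintro ⟨-, hPa⟩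
    funext w hw
    exact hPa w hw
  · rintro rfl
    exact ⟨M.val_decision π ε, fun _ _ => rfl⟩

theorem val_eq_clampedVal_of_ctx_eq (h : M.ctx π ε = o) :
    M.val π ε = M.clampedVal o (π o (ε M.decision)) ε := by
  rw [← M.valDo_clamp π]
  exact (M.solve_doMech_eq_solve_of_solve_eq (M.forall_clamp_val_eq_iff.2 h)).symm

theorem ctx_eq_iff :
    M.ctx π ε = o ↔ ∀ w (hw : M.edge w M.decision),
      M.clampedNaturalVal o (π o (ε M.decision)) ε w = o w hw := by
  have hD : M.naturalVal (M.polMech π) (M.clamp o (π o (ε M.decision))) ε M.decision =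
      π o (ε M.decision) := by
    rw [naturalVal, polMech_decision]
    congr 1
    funext w hw
    exact M.solve_doMech_of_eq_some (M.clamp_of_edge o _ hw)
  rw [← forall_clamp_val_eq_iff, val, forall_solve_eq_iff_forall_naturalVal_eq,
    M.forall_clamp_eq_some_iff (P := fun v x => M.naturalVal _ _ ε v = x), and_iff_right hD]
  refine forall₂_congr fun w hw => ?_
  rw [M.naturalVal_clamp π o _ ε (CID.ne_decision_of_edge hw)]

theorem clampedNaturalVal_congr_of_mem
    (ho : ∀ w (hw : M.edge w M.decision), w ∈ M.requisite → o w hw = o' w hw)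
    (hε : ∀ v ∈ M.utilityConnected, ε v = ε' v) (hv : v ∈ M.utilityConnected) :
    M.clampedNaturalVal o d ε v = M.clampedNaturalVal o' d ε' v := by
  refine M.naturalVal_congr (fun _ _ => rfl) hε (fun u hu w hwu => ?_) hv
  by_cases hw : w ∈ M.observed
  · rcases hw with rfl | hw
    · simp [clamp_decision]
    · simp [M.clamp_of_edge _ _ hw, ho w hw (Or.inr ⟨u, hu, hwu⟩)]
  · simp [M.clamp_of_not_mem_observed _ _ hw, CID.mem_utilityConnected_of_edge hwu hw hu]

theorem clampedNaturalVal_congr_of_not_mem (hε : ∀ v ∉ M.utilityConnected, ε v = ε' v)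
    (hv : v ∉ M.utilityConnected) (hvD : M.edge v M.decision) :
    M.clampedNaturalVal o d ε v = M.clampedNaturalVal o d' ε' v := by
  refine M.naturalVal_congr
    (A := {u | u ∉ M.utilityConnected ∧ Relation.TransGen M.edge u M.decision})
    (fun u hu => ?_) (fun u hu => hε u hu.1) (fun u hu w hwu => ?_) ⟨hv, .single hvD⟩
  · have huD : u ≠ M.decision := by
      rintro rfl
      exact M.acyclic _ hu.2
    exact M.polMech_congr_of_ne _ _ huD
  · have hwD : Relation.TransGen M.edge w M.decision := .head hwu hu.2
    by_cases hw : w ∈ M.observed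
    · rcases hw with rfl | hw
      · exact absurd hwD (M.acyclic _)
      · simp [M.clamp_of_edge _ _ hw]
    · have hwC : w ∉ M.utilityConnected := fun h => hu.1
        (CID.mem_utilityConnected_of_edge_of_reflTransGen hwu hw h hu.2.to_reflTransGen)
      simp [M.clamp_of_not_mem_observed _ _ hw, hwC, hwD]

end Clamping

section Score

variable {o o' : M.Ctx} {d d' : M.dom M.decision} {ε ε' : M.Env} {π : M.Policy}

/-- The utility nodes that the decision can influence. -/
noncomputable def downstreamUtility : Finset V :=
  {u ∈ M.utility | Relation.ReflTransGen M.edge M.decision u}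

/-- The total utility of the nodes that the decision can influence. -/
noncomputable def totDownstreamUtil (a : ∀ v, M.dom v) : ℝ :=
  ∑ u ∈ M.downstreamUtility, M.utilVal u (a u)

/-- The decision context `o` agrees on `S` with the values that the parents of the decision
naturally take under `do(Pa_D = o, D = d)`. -/
def Consistent (S : Set V) (o : M.Ctx) (d : M.dom M.decision) (ε : M.Env) : Prop :=
  ∀ w (hw : M.edge w M.decision), w ∈ S → M.clampedNaturalVal o d ε w = o w hw

/-- The part of the expected downstream utility of choosing `d` in the context `o` that depends
on `d`: a conditional expectation given `o`, up to a factor that is independent of `d`. -/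
noncomputable def score (o : M.Ctx) (d : M.dom M.decision) : ℝ :=
  ∑ ε, M.prob ε *
    if M.Consistent M.utilityConnected o d ε then M.totDownstreamUtil (M.clampedVal o d ε) else 0

theorem consistent_congr_of_mem
    (ho : ∀ w (hw : M.edge w M.decision), w ∈ M.requisite → o w hw = o' w hw)
    (hε : ∀ v ∈ M.utilityConnected, ε v = ε' v) :
    M.Consistent M.utilityConnected o d ε ↔ M.Consistent M.utilityConnected o' d ε' := by
  refine forall₃_congr fun w hw hwC => ?_
  rw [M.clampedNaturalVal_congr_of_mem ho hε hwC, ho w hw (Or.inl hwC)]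

theorem consistent_congr_of_not_mem (hε : ∀ v ∉ M.utilityConnected, ε v = ε' v) :
    M.Consistent M.utilityConnectedᶜ o d ε ↔ M.Consistent M.utilityConnectedᶜ o d' ε' := by
  refine forall₃_congr fun w hw hwC => ?_
  rw [M.clampedNaturalVal_congr_of_not_mem hε hwC hw]

theorem totDownstreamUtil_clampedVal_congr
    (ho : ∀ w (hw : M.edge w M.decision), w ∈ M.requisite → o w hw = o' w hw)
    (hε : ∀ v ∈ M.utilityConnected, ε v = ε' v) :
    M.totDownstreamUtil (M.clampedVal o d ε) = M.totDownstreamUtil (M.clampedVal o' d ε') := by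
  refine Finset.sum_congr rfl fun u hu => ?_
  obtain ⟨hu, hDu⟩ := Finset.mem_filter.1 hu
  have hu' : u ∉ M.observed := CID.not_mem_observed_of_mem_utility hu
  have huC : u ∈ M.utilityConnected := ⟨u, hu, hDu, .refl⟩
  rw [M.clampedVal_of_not_mem_observed _ _ _ hu', M.clampedVal_of_not_mem_observed _ _ _ hu',
    M.clampedNaturalVal_congr_of_mem ho hε huC]

theorem score_congr
    (ho : ∀ w (hw : M.edge w M.decision), w ∈ M.requisite → o w hw = o' w hw) :
    M.score o = M.score o' := by
  funext d
  simp only [score, M.consistent_congr_of_mem ho fun _ _ => rfl,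
    M.totDownstreamUtil_clampedVal_congr ho fun _ _ => rfl]

theorem ctx_eq_iff_consistent :
    M.ctx π ε = o ↔ M.Consistent M.utilityConnectedᶜ o (π o (ε M.decision)) ε ∧
      M.Consistent M.utilityConnected o (π o (ε M.decision)) ε := by
  rw [ctx_eq_iff]
  refine ⟨fun h => ⟨fun w hw _ => h w hw, fun w hw _ => h w hw⟩, fun h w hw => ?_⟩
  by_cases hwC : w ∈ M.utilityConnected
  · exact h.2 w hw hwC
  · exact h.1 w hw hwC

theorem ite_ctx_piecewise_eq (π : M.Policy) (o : M.Ctx) (ε ε' : M.Env) :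
    (if M.ctx π (M.utilityConnected.piecewise ε' ε) = o then
        M.totDownstreamUtil (M.val π (M.utilityConnected.piecewise ε' ε)) else 0) =
      if M.Consistent M.utilityConnectedᶜ o (π o (ε M.decision)) ε then
        if M.Consistent M.utilityConnected o (π o (ε M.decision)) ε' then
          M.totDownstreamUtil (M.clampedVal o (π o (ε M.decision)) ε') else 0
      else 0 := by
  set δ : M.Env := M.utilityConnected.piecewise ε' ε
  have hmem : ∀ v ∈ M.utilityConnected, δ v = ε' v := fun _ => Set.piecewise_eq_of_mem _ _ _
  have hnot : ∀ v ∉ M.utilityConnected, δ v = ε v := fun _ => Set.piecewise_eq_of_notMem _ _ _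
  have hD : δ M.decision = ε M.decision := hnot _ CID.decision_not_mem_utilityConnected
  have hctx := M.ctx_eq_iff_consistent (π := π) (o := o) (ε := δ)
  rw [hD, M.consistent_congr_of_not_mem (d' := π o (ε M.decision)) hnot,
    M.consistent_congr_of_mem (o' := o) (fun _ _ _ => rfl) hmem] at hctx
  rw [← ite_and]
  refine if_ctx_congr hctx (fun h => ?_) fun _ => rfl
  rw [M.val_eq_clampedVal_of_ctx_eq (hctx.2 h), hD,
    M.totDownstreamUtil_clampedVal_congr (fun _ _ _ => rfl) hmem]

theorem sum_prob_mul_ite_ctx_eq (π : M.Policy) (o : M.Ctx) :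
    ∑ ε, M.prob ε * (if M.ctx π ε = o then M.totDownstreamUtil (M.val π ε) else 0) =
      ∑ ε, M.prob ε * if M.Consistent M.utilityConnectedᶜ o (π o (ε M.decision)) ε then
        M.score o (π o (ε M.decision)) else 0 := by
  refine (sum_sum_prod_mul_piecewise M.μ_sum M.utilityConnected _).symm.trans ?_
  refine Finset.sum_congr rfl fun ε _ => ?_
  simp only [ite_ctx_piecewise_eq]
  split_ifs
  · rfl
  · simp

end Score

section Optimality

theorem EUOn_downstreamUtility_eq_sum (π : M.Policy) :
    M.EUOn M.downstreamUtility π = ∑ o : M.Ctx, ∑ ε, M.prob ε *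
      if M.Consistent M.utilityConnectedᶜ o (π o (ε M.decision)) ε then
        M.score o (π o (ε M.decision)) else 0 := by
  simp only [← sum_prob_mul_ite_ctx_eq]
  rw [Finset.sum_comm]
  refine Finset.sum_congr rfl fun ε _ => ?_
  rw [← Finset.mul_sum, Finset.sum_ite_eq, if_pos (Finset.mem_univ _), totDownstreamUtil]

theorem EU_eq_EUOn_add_EUOn (π : M.Policy) :
    M.EU π = M.EUOn M.downstreamUtility π + M.EUOn (M.utility \ M.downstreamUtility) π := by
  have hsub : M.downstreamUtility ⊆ M.utility := Finset.filter_subset _ _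
  rw [add_comm]
  simp only [EU, EUOn, totUtil, ← Finset.sum_add_distrib, ← mul_add, Finset.sum_sdiff hsub]

theorem EUOn_sdiff_downstreamUtility_congr (π π' : M.Policy) :
    M.EUOn (M.utility \ M.downstreamUtility) π = M.EUOn (M.utility \ M.downstreamUtility) π' := by
  refine Finset.sum_congr rfl fun ε _ => congrArg _ (Finset.sum_congr rfl fun u hu => ?_)
  obtain ⟨hu, hdown⟩ := Finset.mem_sdiff.1 hu
  rw [M.val_congr_of_not_reflTransGen π π' ε fun hDu => hdown (Finset.mem_filter.2 ⟨hu, hDu⟩)]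

theorem optimal_of_forall_score_le {π : M.Policy}
    (h : ∀ o e d, M.score o d ≤ M.score o (π o e)) : M.Optimal π := by
  intro π'
  rw [EU_eq_EUOn_add_EUOn, EU_eq_EUOn_add_EUOn, M.EUOn_sdiff_downstreamUtility_congr π' π,
    EUOn_downstreamUtility_eq_sum, EUOn_downstreamUtility_eq_sum]
  gcongr with o _ ε
  · exact M.prob_nonneg ε
  · simp only [M.consistent_congr_of_not_mem (d := π' o (ε M.decision))
      (d' := π o (ε M.decision)) fun _ _ => rfl]
    split_ifs
    · exact h o (ε M.decision) _
    · exact le_rfl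

theorem exists_optimal_eq_of_forall_requisite :
    ∃ π : M.Policy, M.Optimal π ∧ ∀ o o' : M.Ctx,
      (∀ w (hw : M.edge w M.decision), w ∈ M.requisite → o w hw = o' w hw) → π o = π o' := by
  choose argmax hargmax using fun g : M.dom M.decision → ℝ => Finite.exists_max g
  refine ⟨fun o _ => argmax (M.score o),
    M.optimal_of_forall_score_le fun o _ d => hargmax (M.score o) d, fun o o' ho => ?_⟩
  simp only [M.score_congr ho]

end Optimality

end SCIM

/-- **Response incentive graphical criterion: soundness.**
If for every parent `W` of the decision `D` and every utility node `U` it fails to hold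
that simultaneously there is a directed path `X ⇝ W`, a directed path `D ⇝ U`, and `W`
is d-connected to `U` given `({D} ∪ Pa_D) \ {W}`, then no SCIM compatible with `G` has
a response incentive on `X ≠ D`. -/
theorem response_incentive_criterion_soundness
    {V : Type} [Fintype V] [DecidableEq V] (G : CID V) (X : V) (hX : X ≠ G.decision)
    (h : ∀ W, G.edge W G.decision → ∀ u ∈ G.utility,
      ¬ (Relation.ReflTransGen G.edge X W ∧
         Relation.ReflTransGen G.edge G.decision u ∧
         ¬ DSep G.edge {W} {u} (({G.decision} ∪ {w | G.edge w G.decision}) \ {W}))) :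
    ∀ M : SCIM V, M.toCID = G → ¬ M.ResponseIncentive X := by
  rintro M rfl hRI
  obtain ⟨π, hopt, hπ⟩ := M.exists_optimal_eq_of_forall_requisite
  obtain ⟨x, ε, hne⟩ := hRI π hopt
  refine hne ?_
  rw [M.valDo_single_decision π hX, M.val_decision]
  refine congrFun (hπ _ _ fun w hw hreq => ?_) (ε M.decision)
  refine M.valDo_single_of_not_reflTransGen π x ε fun hXw => ?_
  obtain ⟨u, hu, hDu, hsep⟩ := CID.exists_not_dSep_of_mem_requisite hw hreq
  exact h w hw u hu ⟨hXw, hDu, hsep⟩
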